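/- Let $G$ be a finite graph and suppose no vertex of $G$ has more than one cycle in its $r$-neighborhood. Then for any two vertices $i, j$ of $G$ there are at most two paths (self-avoiding walks) of length at most $r$ from $i$ to $j$. -/

import Mathlib

open SimpleGraph in
theorem aux_cross {V : Type*} {G : SimpleGraph V} [DecidableEq V] (S : V → Prop) [DecidablePred S]
    (P : Sym2 V → Prop) [DecidablePred P] (hP : ∀ a b, P s(a, b) ↔ ¬ (S a ↔ S b))
    {x y : V} (w : G.Walk x y) : Even (w.edges.countP (fun e => P e)) ↔ (S x ↔ S y) := by
  induction w with
  | nil => simp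
  | @cons a b c h p ih =>
    rw [Walk.edges_cons, List.countP_cons]
    by_cases h1 : P s(a, b)
    · have := (hP a b).1 h1
      simp only [h1, decide_true, if_true, Nat.even_add_one, ih]
      tauto
    · have h2 : (S a ↔ S b) := by
        have := hP a b
        tauto
      simp only [h1, decide_false, Bool.false_eq_true, if_false, add_zero, ih]
      tauto

open SimpleGraph in
theorem aux_ext {V : Type*} {G : SimpleGraph V} {x y : V} (p q : G.Walk x y)
    (hp : p.IsPath) (hq : q.IsPath) (h : ∀ e, e ∈ p.edges ↔ e ∈ q.edges) : p = q := by
  induction p with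
  | nil => exact (Walk.isPath_iff_nil.1 hq).eq_nil.symm
  | @cons a b c hab p ih =>
    cases q with
    | nil => exact absurd ((h s(a, b)).1 (by simp)) (by simp)
    | @cons _ b' _ hab' q =>
      rw [Walk.cons_isPath_iff] at hp hq
      have h1 : ∀ z, s(a, z) ∉ p.edges := fun z hz => hp.2 (p.fst_mem_support_of_mem_edges hz)
      have h2 : ∀ z, s(a, z) ∉ q.edges := fun z hz => hq.2 (q.fst_mem_support_of_mem_edges hz)
      have hb : b = b' := by
        have := (h s(a, b)).1 (by simp)
        rw [Walk.edges_cons, List.mem_cons] at this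
        rcases this with h3 | h3
        · exact Sym2.congr_right.1 h3
        · exact absurd h3 (h2 _)
      subst hb
      congr 1
      refine ih q hp.1 hq.1 fun e => ?_
      have := h e
      simp only [Walk.edges_cons, List.mem_cons] at this
      by_cases he : e = s(a, b)
      · subst he
        exact iff_of_false (h1 _) (h2 _)
      · tauto

open SimpleGraph in
theorem aux_cycle {V : Type*} [DecidableEq V] {G : SimpleGraph V} {i j : V} (p q : G.Walk i j)
    (hp : p.IsPath) (hq : q.IsPath) (r : ℕ) (lp : p.length ≤ r) (lq : q.length ≤ r)
    (e : Sym2 V) (he : e ∈ symmDiff p.edges.toFinset q.edges.toFinset) :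
    ∃ (u : V) (c : G.Walk u u), c.IsCycle ∧ e ∈ c.edges ∧
      (∀ z ∈ c.support, G.dist i z ≤ r) ∧
      c.edges.toFinset ⊆ symmDiff p.edges.toFinset q.edges.toFinset := by
  classical
  set D := symmDiff p.edges.toFinset q.edges.toFinset with hD
  have hDG : ∀ e ∈ D, e ∈ G.edgeSet := by
    intro e he
    simp only [hD, Finset.mem_symmDiff, List.mem_toFinset] at he
    rcases he with h | h
    · exact p.edges_subset_edgeSet h.1
    · exact q.edges_subset_edgeSet h.1
  let H : SimpleGraph V := SimpleGraph.fromEdgeSet (D : Set (Sym2 V))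
  have hH : ∀ a b, H.Adj a b ↔ s(a, b) ∈ D := by
    intro a b
    simp only [H, fromEdgeSet_adj, Finset.mem_coe]
    exact ⟨fun h => h.1, fun h => ⟨h, G.ne_of_adj (hDG _ h)⟩⟩
  have hle : H ≤ G := fun a b h => hDG _ ((hH a b).1 h)
  have hdist : ∀ (w : G.Walk i j), w.length ≤ r → ∀ z ∈ w.support, G.dist i z ≤ r :=
    fun w hw z hz => (dist_le (w.takeUntil z hz)).trans ((w.length_takeUntil_le_length hz).trans hw)
  induction e using Sym2.ind with
  | _ a b =>
  have key : (H \ fromEdgeSet {s(a, b)}).Reachable a b := by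
    by_contra hnr
    let S : V → Prop := fun z => (H \ fromEdgeSet {s(a, b)}).Reachable a z
    let P : Sym2 V → Prop := Sym2.lift ⟨fun x y => ¬ (S x ↔ S y), fun x y => by
      simp only [eq_iff_iff]
      tauto⟩
    have hP : ∀ x y, P s(x, y) ↔ ¬ (S x ↔ S y) := fun x y => Iff.rfl
    have cp := aux_cross S P hP p
    have cq := aux_cross S P hP q
    have card : ∀ w : G.Walk i j, w.IsPath → w.edges.countP (fun e => P e) =
        (w.edges.toFinset.filter P).card := by
      intro w hw
      rw [List.countP_eq_length_filter,
        ← List.toFinset_card_of_nodup ((hw.isTrail.edges_nodup).filter _)]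
      congr 1
      ext f
      simp
    rw [card p hp] at cp
    rw [card q hq] at cq
    have hDf : D.filter P = {s(a, b)} := by
      ext f
      induction f using Sym2.ind with
      | _ x y =>
      simp only [Finset.mem_filter, Finset.mem_singleton]
      constructor
      · rintro ⟨h1, h2⟩
        by_contra hne
        have hadj : (H \ fromEdgeSet {s(a, b)}).Adj x y := by
          rw [sdiff_adj, hH, fromEdgeSet_adj]
          exact ⟨h1, fun h => hne h.1⟩
        exact (hP x y).1 h2 ⟨fun h => h.trans hadj.reachable, fun h => h.trans hadj.symm.reachable⟩
      · intro h
        rw [h]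
        refine ⟨he, (hP a b).2 fun h => hnr (h.1 (Reachable.refl _))⟩
    have hsd : D.filter P = symmDiff (p.edges.toFinset.filter P) (q.edges.toFinset.filter P) := by
      ext f
      simp only [hD, Finset.mem_filter, Finset.mem_symmDiff]
      tauto
    have hpar : ∀ A B : Finset (Sym2 V), (symmDiff A B).card + 2 * (A ∩ B).card = A.card + B.card := by
      intro A B
      have h1 := Finset.card_sdiff_add_card_inter A B
      have h2 := Finset.card_sdiff_add_card_inter B A
      have h3 : (symmDiff A B).card = (A \ B).card + (B \ A).card := by
        rw [← Finset.card_union_of_disjoint disjoint_sdiff_sdiff]; rfl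
      rw [Finset.inter_comm B A] at h2
      omega
    have h4 := hpar (p.edges.toFinset.filter P) (q.edges.toFinset.filter P)
    rw [← hsd, hDf, Finset.card_singleton] at h4
    have h5 := cp.trans cq.symm
    rw [Nat.even_iff, Nat.even_iff] at h5
    omega
  obtain ⟨u, c, hc, hec⟩ := adj_and_reachable_delete_edges_iff_exists_cycle.1 ⟨(hH a b).2 he, key⟩
  have hcD : ∀ f ∈ c.edges, f ∈ D := by
    intro f hf
    have := c.edges_subset_edgeSet hf
    induction f using Sym2.ind with
    | _ x y => exact (hH x y).1 this
  refine ⟨u, c.mapLe hle, hc.mapLe hle, by simpa using hec, ?_, ?_⟩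
  · intro z hz
    rw [Walk.support_mapLe_eq_support] at hz
    obtain ⟨f, hf, hzf⟩ := (Walk.mem_support_iff_exists_mem_edges_of_not_nil hc.not_nil).1 hz
    have := hcD f hf
    simp only [hD, Finset.mem_symmDiff, List.mem_toFinset] at this
    rcases this with h | h
    · exact hdist p lp z (p.mem_support_of_mem_edges h.1 hzf)
    · exact hdist q lq z (q.mem_support_of_mem_edges h.1 hzf)
  · intro f hf
    rw [List.mem_toFinset, Walk.edges_mapLe_eq_edges] at hf
    exact hcD f hf


/-- **At most two short paths under the one-cycle condition.** If in a finite graph `G` no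
vertex has more than one cycle in its `r`-neighborhood (formalized: any two cycles lying
entirely within distance `r` of a common vertex have the same edge set), then for any two
vertices `i, j` there are at most two paths of length at most `r` from `i` to `j`: among any
three such paths, two coincide. -/
theorem stmt_4 {V : Type*} [Fintype V] [DecidableEq V] (G : SimpleGraph V) (r : ℕ)
    (honeCycle : ∀ (v u₁ u₂ : V) (c₁ : G.Walk u₁ u₁) (c₂ : G.Walk u₂ u₂),
      c₁.IsCycle → c₂.IsCycle →
      (∀ z ∈ c₁.support, G.dist v z ≤ r) → (∀ z ∈ c₂.support, G.dist v z ≤ r) →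
      c₁.edges.toFinset = c₂.edges.toFinset)
    (i j : V) (p₁ p₂ p₃ : G.Walk i j)
    (h₁ : p₁.IsPath) (h₂ : p₂.IsPath) (h₃ : p₃.IsPath)
    (l₁ : p₁.length ≤ r) (l₂ : p₂.length ≤ r) (l₃ : p₃.length ≤ r) :
    p₁ = p₂ ∨ p₁ = p₃ ∨ p₂ = p₃ := by
  by_contra hcon
  push Not at hcon
  obtain ⟨n12, n13, n23⟩ := hcon
  have ne : ∀ p q : G.Walk i j, p.IsPath → q.IsPath → p ≠ q →
      ∃ e, e ∈ symmDiff p.edges.toFinset q.edges.toFinset := by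
    intro p q hp hq hpq
    by_contra h
    push Not at h
    refine hpq (aux_ext p q hp hq fun e => ?_)
    have := h e
    simp only [Finset.mem_symmDiff, List.mem_toFinset] at this
    tauto
  have sub : ∀ p q p' q' : G.Walk i j, p.IsPath → q.IsPath → p'.IsPath → q'.IsPath →
      p.length ≤ r → q.length ≤ r → p'.length ≤ r → q'.length ≤ r → p' ≠ q' →
      ∀ e ∈ symmDiff p.edges.toFinset q.edges.toFinset,
        e ∈ symmDiff p'.edges.toFinset q'.edges.toFinset := by
    intro p q p' q' hp hq hp' hq' lp lq lp' lq' hne e he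
    obtain ⟨f, hf⟩ := ne p' q' hp' hq' hne
    obtain ⟨u, c, hc, hec, hd, -⟩ := aux_cycle p q hp hq r lp lq e he
    obtain ⟨u', c', hc', -, hd', hs⟩ := aux_cycle p' q' hp' hq' r lp' lq' f hf
    apply hs
    rw [← honeCycle i u u' c c' hc hc' hd hd']
    exact List.mem_toFinset.2 hec
  refine n23 (aux_ext p₂ p₃ h₂ h₃ fun e => ?_)
  have a := sub p₁ p₂ p₁ p₃ h₁ h₂ h₁ h₃ l₁ l₂ l₁ l₃ n13 e
  have b := sub p₁ p₃ p₁ p₂ h₁ h₃ h₁ h₂ l₁ l₃ l₁ l₂ n12 e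
  simp only [Finset.mem_symmDiff, List.mem_toFinset] at a b
  tauto
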